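/- (Refined upper bound, footnote to Corollary 1.4.) There exists an absolute constant C such that every hypergraph H = (V, (e_i)_{i ∈ I}) with all hyperedges nonempty, |V| ≥ 2 and |I| ≥ 2 admits a hypergraph bipartite decomposition with at most C · log₂|V| · log₂|I| colors. -/

import Mathlib

/-- A hypergraph given by a vertex set `Vset`, an index set `I` and a hyperedge map `e`
admits a *hypergraph bipartite decomposition* with (at most) `k` colors. -/
def HasHBD {α β : Type} [DecidableEq α] (Vset : Finset α) (I : Finset β)
    (e : β → Finset α) (k : ℕ) : Prop :=
  ∃ color : β → Fin k, ∀ m : Fin k, ∃ U ⊆ Vset,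
    ∀ i ∈ I, color i = m → (U ∩ e i).card = 1

/-! Put each vertex into `U` independently with probability `p = 1 / (3 · 2 ^ j)`. If
`2 ^ j ≤ |e| < 2 ^ (j + 1)`, then `x = p |e|` lies between `1/3` and `2/3`, so `|U ∩ e| = 1` has
probability at least `x (1 - x) ≥ 2/9`. By averaging, some `U` meets at least `2/9` of any given
hyperedges of this dyadic size class in exactly one vertex. Choosing such sets greedily,
`3 (⌊log₂ |I|⌋ + 1)` of them suffice for the class, because `(7/9)^3 < 1/2`; and there are at most
`⌊log₂ |V|⌋ + 1` classes. -/

open Finset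

section BernoulliWeight

variable {α R : Type*} [DecidableEq α] [CommRing R] (p : R) {V U e : Finset α} {a : α}

/-- The probability that a random subset of `V`, containing each element independently with
probability `p`, is equal to `U`. It is meant for `U ⊆ V`, and `p` may lie in any commutative
ring since only the algebra of these weights is needed to compute with them. -/
def bernoulliWeight (V U : Finset α) : R :=
  p ^ #U * (1 - p) ^ #(V \ U)

theorem bernoulliWeight_insert (ha : a ∉ V) (hU : U ⊆ V) :
    bernoulliWeight p (insert a V) U = (1 - p) * bernoulliWeight p V U := by
  have haU : a ∉ U := fun h => ha (hU h)
  rw [bernoulliWeight, bernoulliWeight, insert_sdiff_of_notMem V haU,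
    card_insert_of_notMem fun h => ha (mem_sdiff.1 h).1]
  ring

theorem bernoulliWeight_insert_insert (ha : a ∉ V) (hU : U ⊆ V) :
    bernoulliWeight p (insert a V) (insert a U) = p * bernoulliWeight p V U := by
  have haU : a ∉ U := fun h => ha (hU h)
  rw [bernoulliWeight, bernoulliWeight, insert_sdiff_insert, sdiff_insert_of_notMem ha,
    card_insert_of_notMem haU]
  ring

theorem sum_bernoulliWeight_inter (F : Finset α → R) (he : e ⊆ V) :
    ∑ U ∈ V.powerset, F (U ∩ e) * bernoulliWeight p V U =
      ∑ A ∈ e.powerset, F A * bernoulliWeight p e A := by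
  obtain ⟨d, hd, rfl⟩ : ∃ d, Disjoint d e ∧ d ∪ e = V :=
    ⟨V \ e, sdiff_disjoint, sdiff_union_of_subset he⟩
  clear he
  induction d using Finset.induction_on with
  | empty =>
    rw [empty_union]
    refine sum_congr rfl fun A hA => ?_
    rw [inter_eq_left.2 (mem_powerset.1 hA)]
  | insert a d had ih =>
    obtain ⟨hae, hde⟩ := disjoint_insert_left.1 hd
    have ha : a ∉ d ∪ e := by simp only [mem_union, had, hae, or_self, not_false_eq_true]
    rw [insert_union, sum_powerset_insert ha, ← ih hde, ← sum_add_distrib]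
    refine sum_congr rfl fun U hU => ?_
    rw [bernoulliWeight_insert p ha (mem_powerset.1 hU),
      bernoulliWeight_insert_insert p ha (mem_powerset.1 hU), insert_inter_of_notMem hae]
    ring

theorem sum_bernoulliWeight (V : Finset α) :
    ∑ U ∈ V.powerset, bernoulliWeight p V U = 1 := by
  simpa [bernoulliWeight] using sum_bernoulliWeight_inter p (fun _ => 1) (empty_subset V)

theorem sum_bernoulliWeight_card_inter_eq (he : e ⊆ V) (k : ℕ) :
    ∑ U ∈ V.powerset with #(U ∩ e) = k, bernoulliWeight p V U =
      (#e).choose k * (p ^ k * (1 - p) ^ (#e - k)) := by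
  have hmarginal := sum_bernoulliWeight_inter p (fun A => if #A = k then 1 else 0) he
  simp only [ite_mul, one_mul, zero_mul, ← sum_filter] at hmarginal
  rw [hmarginal, ← powersetCard_eq_filter, ← card_powersetCard, ← nsmul_eq_mul]
  refine sum_eq_card_nsmul fun A hA => ?_
  obtain ⟨hAe, hA⟩ := mem_powersetCard.1 hA
  rw [bernoulliWeight, card_sdiff_of_subset hAe, hA]

end BernoulliWeight

section OrderedRing

variable {R : Type*} [CommRing R] [LinearOrder R] [IsStrictOrderedRing R]

theorem bernoulliWeight_nonneg {α : Type*} [DecidableEq α] {p : R} (hp₀ : 0 ≤ p) (hp₁ : p ≤ 1)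
    (V U : Finset α) : 0 ≤ bernoulliWeight p V U :=
  mul_nonneg (pow_nonneg hp₀ _) (pow_nonneg (sub_nonneg.2 hp₁) _)

theorem mul_one_sub_mul_le_mul_pow {p : R} (hp₀ : 0 ≤ p) (hp₁ : p ≤ 1) (n : ℕ) :
    n * p * (1 - n * p) ≤ n * (p * (1 - p) ^ (n - 1)) := by
  have hbernoulli : 1 - n * p ≤ (1 - p) ^ (n - 1) :=
    calc 1 - n * p = 1 + n * -p := by ring
      _ ≤ (1 + -p) ^ n := one_add_mul_le_pow (by linarith) n
      _ ≤ (1 - p) ^ (n - 1) := by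
        rw [← sub_eq_add_neg]
        exact pow_le_pow_of_le_one (by linarith) (by linarith) (Nat.sub_le n 1)
  rw [← mul_assoc]
  gcongr

variable {ι γ : Type*} {r : γ → ι → Prop} [DecidableRel r] {S : Finset γ} {w : γ → R} {c : R}

theorem exists_mul_card_le_card_filter (hw : ∀ x ∈ S, 0 ≤ w x) (hsum : ∑ x ∈ S, w x = 1)
    (I : Finset ι) (h : ∀ i ∈ I, c ≤ ∑ x ∈ S with r x i, w x) :
    ∃ x ∈ S, c * #I ≤ #{i ∈ I | r x i} := by
  have hS : S.Nonempty := nonempty_of_sum_ne_zero (hsum.trans_ne one_ne_zero)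
  obtain ⟨x, hx, hmax⟩ := exists_max_image S (fun x => #{i ∈ I | r x i}) hS
  refine ⟨x, hx, ?_⟩
  calc c * #I = ∑ _ ∈ I, c := by rw [sum_const, nsmul_eq_mul, mul_comm]
    _ ≤ ∑ i ∈ I, ∑ y ∈ S with r y i, w y := sum_le_sum h
    _ = ∑ y ∈ S, w y * #{i ∈ I | r y i} := by
      simp only [sum_filter, card_filter, Nat.cast_sum, Nat.cast_ite, Nat.cast_one,
        Nat.cast_zero, mul_sum, mul_ite, mul_one, mul_zero]
      exact sum_comm
    _ ≤ ∑ y ∈ S, w y * #{i ∈ I | r x i} :=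
      sum_le_sum fun y hy =>
        mul_le_mul_of_nonneg_left (Nat.cast_le.2 (hmax y hy)) (hw y hy)
    _ = #{i ∈ I | r x i} := by rw [← sum_mul, hsum, one_mul]

theorem exists_fin_cover_of_weight (hw : ∀ x ∈ S, 0 ≤ w x) (hsum : ∑ x ∈ S, w x = 1) (hc : c ≤ 1)
    {t : ℕ} {I : Finset ι} (h : ∀ i ∈ I, c ≤ ∑ x ∈ S with r x i, w x)
    (ht : (1 - c) ^ t * #I < 1) :
    ∃ x : Fin t → γ, (∀ m, x m ∈ S) ∧ ∀ i ∈ I, ∃ m, r (x m) i := by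
  induction t generalizing I with
  | zero =>
    have hI : I = ∅ := by simpa using ht
    exact ⟨Fin.elim0, fun m => m.elim0, by simp [hI]⟩
  | succ t ih =>
    obtain ⟨y, hy, hcover⟩ := exists_mul_card_le_card_filter hw hsum I h
    have hcard : (#{i ∈ I | r y i} + #{i ∈ I | ¬ r y i} : R) = #I := by
      exact_mod_cast card_filter_add_card_filter_not (s := I) (r y)
    have hrest : (1 - c) ^ t * #{i ∈ I | ¬ r y i} < 1 :=
      calc (1 - c) ^ t * #{i ∈ I | ¬ r y i} ≤ (1 - c) ^ t * ((1 - c) * #I) :=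
            mul_le_mul_of_nonneg_left (by linarith) (pow_nonneg (sub_nonneg.2 hc) t)
        _ = (1 - c) ^ (t + 1) * #I := by ring
        _ < 1 := ht
    obtain ⟨x, hx, hxr⟩ := ih (fun i hi => h i (mem_filter.1 hi).1) hrest
    refine ⟨Fin.cons y x, Fin.cases hy hx, fun i hi => ?_⟩
    by_cases hyi : r y i
    · exact ⟨0, hyi⟩
    · obtain ⟨m, hm⟩ := hxr i (mem_filter.2 ⟨hi, hyi⟩)
      exact ⟨m.succ, hm⟩

end OrderedRing

theorem two_ninths_le_sum_bernoulliWeight {α K : Type*} [DecidableEq α] [Field K] [LinearOrder K]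
    [IsStrictOrderedRing K] {V e : Finset α} {p : K} (he : e ⊆ V) (hp₀ : 0 ≤ p) (hp₁ : p ≤ 1)
    (hlow : 1 / 3 ≤ #e * p) (hup : #e * p ≤ 2 / 3) :
    2 / 9 ≤ ∑ U ∈ V.powerset with #(U ∩ e) = 1, bernoulliWeight p V U :=
  calc
    2 / 9 ≤ #e * p * (1 - #e * p) := by
      nlinarith [mul_nonneg (sub_nonneg.2 hlow) (sub_nonneg.2 hup)]
    _ ≤ #e * (p * (1 - p) ^ (#e - 1)) := mul_one_sub_mul_le_mul_pow hp₀ hp₁ _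
    _ = ∑ U ∈ V.powerset with #(U ∩ e) = 1, bernoulliWeight p V U := by
      rw [sum_bernoulliWeight_card_inter_eq p he, Nat.choose_one_right, pow_one]

theorem exists_fin_cover_of_log_card_eq {α β : Type*} [DecidableEq α] {V : Finset α}
    {I : Finset β} {e : β → Finset α} {j t : ℕ} (hV : ∀ i ∈ I, e i ⊆ V)
    (hne : ∀ i ∈ I, (e i).Nonempty) (hj : ∀ i ∈ I, Nat.log 2 #(e i) = j)
    (ht : (7 / 9 : ℝ) ^ t * #I < 1) :
    ∃ U : Fin t → Finset α, (∀ m, U m ⊆ V) ∧ ∀ i ∈ I, ∃ m, #(U m ∩ e i) = 1 := by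
  have hpow : (1 : ℝ) ≤ 2 ^ j := one_le_pow₀ one_le_two
  let p : ℝ := 1 / (3 * 2 ^ j)
  have hp₀ : 0 ≤ p := by positivity
  have hp₁ : p ≤ 1 := (div_le_one₀ (by positivity)).2 (by linarith)
  have hprob : ∀ i ∈ I, 2 / 9 ≤ ∑ U ∈ V.powerset with #(U ∩ e i) = 1, bernoulliWeight p V U := by
    intro i hi
    obtain ⟨hle, hlt⟩ :=
      (Nat.log_eq_iff (.inr ⟨one_lt_two, (hne i hi).card_ne_zero⟩)).1 (hj i hi)
    have hle' : (2 : ℝ) ^ j ≤ #(e i) := by exact_mod_cast hle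
    have hlt' : (#(e i) : ℝ) < 2 ^ j * 2 := by exact_mod_cast hlt
    have hmean : #(e i) * p = #(e i) / (3 * 2 ^ j) := mul_one_div _ _
    refine two_ninths_le_sum_bernoulliWeight (hV i hi) hp₀ hp₁ ?_ ?_ <;> rw [hmean]
    · exact (le_div_iff₀ (by positivity)).2 (by linarith)
    · exact (div_le_iff₀ (by positivity)).2 (by linarith)
  obtain ⟨U, hU, hcover⟩ := exists_fin_cover_of_weight (r := fun U i => #(U ∩ e i) = 1)
    (fun U _ => bernoulliWeight_nonneg hp₀ hp₁ V U) (sum_bernoulliWeight p V) (by norm_num)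
    hprob (t := t) (by norm_num; exact ht)
  exact ⟨U, fun m => mem_powerset.1 (hU m), hcover⟩

theorem seven_ninths_pow_mul_lt_one (n : ℕ) :
    (7 / 9 : ℝ) ^ (3 * (Nat.log 2 n + 1)) * n < 1 := by
  have hn : (n : ℝ) < 2 ^ (Nat.log 2 n + 1) := by
    exact_mod_cast Nat.lt_pow_succ_log_self one_lt_two n
  calc (7 / 9 : ℝ) ^ (3 * (Nat.log 2 n + 1)) * n
      < (7 / 9) ^ (3 * (Nat.log 2 n + 1)) * 2 ^ (Nat.log 2 n + 1) := by gcongr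
    _ = ((7 / 9) ^ 3 * 2) ^ (Nat.log 2 n + 1) := by rw [pow_mul, ← mul_pow]
    _ ≤ 1 := pow_le_one₀ (by norm_num) (by norm_num)

section HasHBD

variable {α β : Type} [DecidableEq α] {V : Finset α} {I : Finset β} {e : β → Finset α}

theorem hasHBD_of_forall_exists_card_inter_eq_one {κ : Type*} [Fintype κ] [Nonempty κ]
    (U : κ → Finset α) (hU : ∀ m, U m ⊆ V) (h : ∀ i ∈ I, ∃ m, #(U m ∩ e i) = 1) :
    HasHBD V I e (Fintype.card κ) := by
  classical
  choose! color hcolor using h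
  let φ := Fintype.equivFin κ
  refine ⟨φ ∘ color, fun m => ⟨U (φ.symm m), hU _, ?_⟩⟩
  rintro i hi rfl
  simpa only [Function.comp_apply, Equiv.symm_apply_apply] using hcolor i hi

theorem hasHBD_log_mul_log (hV : ∀ i ∈ I, e i ⊆ V) (hne : ∀ i ∈ I, (e i).Nonempty) :
    HasHBD V I e ((Nat.log 2 #V + 1) * (3 * (Nat.log 2 #I + 1))) := by
  have hclass : ∀ j, ∃ U : Fin (3 * (Nat.log 2 #I + 1)) → Finset α, (∀ m, U m ⊆ V) ∧
      ∀ i ∈ {i ∈ I | Nat.log 2 #(e i) = j}, ∃ m, #(U m ∩ e i) = 1 := by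
    intro j
    refine exists_fin_cover_of_log_card_eq (j := j) (fun i hi => hV i (mem_filter.1 hi).1)
      (fun i hi => hne i (mem_filter.1 hi).1) (fun i hi => (mem_filter.1 hi).2) ?_
    refine lt_of_le_of_lt ?_ (seven_ninths_pow_mul_lt_one #I)
    gcongr
    exact filter_subset _ _
  choose U hU hcover using hclass
  have hHBD := hasHBD_of_forall_exists_card_inter_eq_one (V := V) (I := I) (e := e)
    (fun m : Fin (Nat.log 2 #V + 1) × Fin (3 * (Nat.log 2 #I + 1)) => U m.1 m.2)
    (fun m => hU m.1 m.2) fun i hi => by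
      obtain ⟨m, hm⟩ := hcover _ i (mem_filter.2 ⟨hi, rfl⟩)
      have hlog : Nat.log 2 #(e i) < Nat.log 2 #V + 1 :=
        Nat.lt_succ_of_le (Nat.log_mono_right (card_le_card (hV i hi)))
      exact ⟨(⟨_, hlog⟩, m), hm⟩
  simpa only [Fintype.card_prod, Fintype.card_fin] using hHBD

end HasHBD

theorem natLog_add_one_le_two_mul_logb {b n : ℕ} (hb : 1 < b) (hn : b ≤ n) :
    (Nat.log b n + 1 : ℝ) ≤ 2 * Real.logb b n := by
  have hfloor : (Nat.log b n : ℝ) ≤ Real.logb b n := Real.natLog_le_logb n b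
  have hone : (1 : ℝ) ≤ Nat.log b n := by exact_mod_cast Nat.log_pos hb hn
  linarith

/-- Refined upper bound (footnote to Corollary 1.4): every hypergraph with at least two
vertices and at least two hyperedges admits an HBD with at most
`C · log₂|V| · log₂|I|` colors. -/
theorem hbd_refined_upper_bound :
    ∃ C : ℝ, 0 < C ∧
      ∀ (α β : Type) [DecidableEq α] (Vset : Finset α) (I : Finset β)
        (e : β → Finset α),
        (∀ i ∈ I, e i ⊆ Vset) → (∀ i ∈ I, (e i).Nonempty) →
        2 ≤ Vset.card → 2 ≤ I.card →
        ∃ k : ℕ, (k : ℝ) ≤ C * Real.logb 2 Vset.card * Real.logb 2 I.card ∧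
          HasHBD Vset I e k := by
  refine ⟨12, by norm_num, fun α β _ V I e hV hne hVcard hIcard =>
    ⟨_, ?_, hasHBD_log_mul_log hV hne⟩⟩
  have hlogV : (Nat.log 2 #V + 1 : ℝ) ≤ 2 * Real.logb 2 #V :=
    natLog_add_one_le_two_mul_logb one_lt_two hVcard
  have hlogI : (Nat.log 2 #I + 1 : ℝ) ≤ 2 * Real.logb 2 #I :=
    natLog_add_one_le_two_mul_logb one_lt_two hIcard
  push_cast
  calc (Nat.log 2 #V + 1 : ℝ) * (3 * (Nat.log 2 #I + 1))
      ≤ (2 * Real.logb 2 #V) * (3 * (2 * Real.logb 2 #I)) := by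
        gcongr
        exact le_trans (by positivity) hlogV
    _ = 12 * Real.logb 2 #V * Real.logb 2 #I := by ring
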